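/- Let T be a tree on t vertices with a root z that is not a leaf, and let U ⊆ V(T) be a set such that: U is a vertex cover of T of minimum size; no vertex of U is a leaf of T; and a vertex v ∈ V(T) lies in U if and only if v has a child (with respect to z) not contained in U. Set μ := M_{T[U]}(|U|) (the maximum running time of the T[U]-bootstrap process over starting graphs on |U| vertices, where T[U] is the forest induced by T on U), δ := min_{u∈U} |N_T(u) \ U|, and i* := 1 + 3⌈height_z(T)/2⌉ + μ + δ. Let (G_i)_{i≥0} be a T-bootstrap process whose starting graph has n ≥ 2t vertices. If τ_T(G_0) > i*, then G_{i*} contains at least |U| + δ − 2 universal vertices. -/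

import Mathlib

/-!
Write `s = |U|`, `q = ⌈height_z(T) / 2⌉`. A step adds `xy` exactly when `T` embeds in the current
graph plus `xy` with `xy` used (`bootStep_of_map`, `exists_map_of_bootStep`). All embeddings below
place `U` by one map and the complement of `U`, which is independent in `T`, by another.

The first step produces a copy `φ` of `T`. Working from the bottom of the tree upwards, each
`v ∈ U` has a child outside `U`, and moving that child to a new place joins `φ v` to it. After `2q`
further steps the set `φ(U)` is therefore complete to its complement
(`RootedCover.exists_dominates`).

Two counting facts about `T` and `φ(U)` drive the rest. If `A` misses a vertex of `U` and
`|A| ≤ s + k`, then `T - A` has a vertex of `U` of degree at least `δ - 1 - k` outside `U`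
(`RootedCover.exists_large_degree`). For `k = 0` and `A` the part of a new copy of `T` lying in
`φ(U)`, this says that a new edge either yields a vertex `x` outside `φ(U)` with `δ - 1` neighbours
outside `φ(U)`, or is an edge added by the `T[U]`-process on `φ(U)`. The latter can happen for at
most `μ` steps in a row (`Dominates.exists_degree`). One step later `x` is universal
(`Dominates.mem_univSet`). With `x` as a spare vertex, `q` more steps, again from the bottom of the
tree upwards, make all of `φ(U)` universal (`Dominates.subset_univSet`). This gives `s + 1`
universal vertices at time `3q + μ + 3`. From then on every step that changes the graph creates a
further universal vertex, by the counting fact with `A` the part of a new copy of `T` lying among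
the `s + k` universal vertices (`RootedCover.univSet_growth`). If `δ = 1` the degree condition on
`x` is empty, and the wait of `μ + 1` steps is not needed.
-/

open SimpleGraph

/-- The number of subgraphs of `G` isomorphic to `H`. -/
noncomputable def numCopies {α β : Type*} (H : SimpleGraph α) (G : SimpleGraph β) : ℕ :=
  {G' : G.Subgraph | Nonempty (G'.coe ≃g H)}.ncard

/-- One step of the `H`-bootstrap process: add every missing edge whose addition
creates a new copy of `H`. -/
noncomputable def bootStep {α β : Type*} (H : SimpleGraph α) (G : SimpleGraph β) :
    SimpleGraph β :=
  G ⊔ SimpleGraph.fromRel (fun u v =>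
    numCopies H G < numCopies H (G ⊔ SimpleGraph.fromEdgeSet {s(u, v)}))

/-- The `H`-bootstrap process `(G_i)_{i ≥ 0}` on the starting graph `G`. -/
noncomputable def bootProcess {α β : Type*} (H : SimpleGraph α) (G : SimpleGraph β) :
    ℕ → SimpleGraph β
  | 0 => G
  | i + 1 => bootStep H (bootProcess H G i)

/-- The running time `τ_H(G)` of the `H`-bootstrap process on `G`. -/
noncomputable def runningTime {α β : Type*} (H : SimpleGraph α) (G : SimpleGraph β) : ℕ :=
  sInf {t | bootProcess H G t = bootProcess H G (t + 1)}

/-- `M_H(n)`, the maximum running time of the `H`-bootstrap process over all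
`n`-vertex starting graphs. -/
noncomputable def maxRunningTime {α : Type*} (H : SimpleGraph α) (n : ℕ) : ℕ :=
  sSup {t | ∃ G : SimpleGraph (Fin n), runningTime H G = t}

/-- The height of the tree `T` with respect to the root `z`: for a tree this equals the
largest distance from `z` to a vertex. -/
noncomputable def treeHeight {V : Type*} (T : SimpleGraph V) (z : V) : ℕ :=
  sSup {d : ℕ | ∃ v : V, T.dist z v = d}

/-! ### Copies of a graph and steps of the process -/

section Copies

variable {α β : Type*}

/-- A subgraph of `G`, seen as a subgraph of a larger graph. -/
def liftSubgraph {G K : SimpleGraph β} (h : G ≤ K) (G' : G.Subgraph) : K.Subgraph where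
  verts := G'.verts
  Adj := G'.Adj
  adj_sub := fun e => h (G'.adj_sub e)
  edge_vert := G'.edge_vert
  symm := G'.symm

lemma liftSubgraph_injective {G K : SimpleGraph β} (h : G ≤ K) :
    Function.Injective (liftSubgraph h) := by
  intro A B hAB
  have h1 := congrArg Subgraph.verts hAB
  have h2 := congrArg Subgraph.Adj hAB
  exact Subgraph.ext h1 h2

/-- If an injection maps `H` into `G` plus at most one extra edge, and that extra edge is the
image of an edge of `H`, then the `H`-process adds it. -/
lemma bootStep_of_map [Finite β] {H : SimpleGraph α} {G : SimpleGraph β} {f : α → β}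
    (hf : Function.Injective f) {a b : α} (hab : H.Adj a b)
    (h : ∀ c d, H.Adj c d → G.Adj (f c) (f d) ∨ s(f c, f d) = s(f a, f b)) :
    (bootStep H G).Adj (f a) (f b) := by
  classical
  by_cases hG : G.Adj (f a) (f b)
  · exact Or.inl hG
  have hne : f a ≠ f b := fun e => hab.ne (hf e)
  refine Or.inr ((SimpleGraph.fromRel_adj _ _ _).2 ⟨hne, Or.inl ?_⟩)
  have hle : G ≤ G ⊔ SimpleGraph.fromEdgeSet {s(f a, f b)} := le_sup_left
  unfold numCopies
  rw [← Set.ncard_image_of_injective _ (liftSubgraph_injective hle)]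
  refine Set.ncard_lt_ncard ?_ (Set.toFinite _)
  rw [Set.ssubset_iff_of_subset]
  · let K : (G ⊔ SimpleGraph.fromEdgeSet {s(f a, f b)}).Subgraph :=
      { verts := Set.range f
        Adj := fun x y => ∃ c d, H.Adj c d ∧ f c = x ∧ f d = y
        adj_sub := by
          rintro x y ⟨c, d, hcd, rfl, rfl⟩
          rcases h c d hcd with h1 | h1
          · exact Or.inl h1
          · refine Or.inr ((SimpleGraph.fromEdgeSet_adj _).2 ⟨h1, fun e => hcd.ne (hf e)⟩)
        edge_vert := by
          rintro x y ⟨c, d, hcd, rfl, rfl⟩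
          exact ⟨c, rfl⟩
        symm := by
          constructor
          rintro x y ⟨c, d, hcd, rfl, rfl⟩
          exact ⟨d, c, hcd.symm, rfl, rfl⟩ }
    refine ⟨K, ⟨?_⟩, ?_⟩
    · refine SimpleGraph.Iso.symm ⟨Equiv.ofInjective f hf, ?_⟩
      intro c d
      constructor
      · rintro ⟨c', d', h1, h2, h3⟩
        have h2' := hf h2
        have h3' := hf h3
        subst h2' h3'
        exact h1
      · intro h1
        exact ⟨c, d, h1, rfl, rfl⟩
    · rintro ⟨K', -, hK'⟩
      have h2 : (liftSubgraph hle K').Adj (f a) (f b) := by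
        rw [hK']
        exact ⟨a, b, hab, rfl, rfl⟩
      exact hG (K'.adj_sub h2)
  · rintro _ ⟨K', hK', rfl⟩
    exact hK'

lemma exists_map_of_numCopies_lt [Finite β] {H : SimpleGraph α} {G : SimpleGraph β} {u v : β}
    (h : numCopies H G < numCopies H (G ⊔ SimpleGraph.fromEdgeSet {s(u, v)})) :
    ∃ f : α → β, Function.Injective f ∧
      (∀ c d, H.Adj c d → G.Adj (f c) (f d) ∨ s(f c, f d) = s(u, v)) ∧
      ∃ a b, H.Adj a b ∧ f a = u ∧ f b = v := by
  classical
  have hle : G ≤ G ⊔ SimpleGraph.fromEdgeSet {s(u, v)} := le_sup_left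
  by_contra hcon
  refine absurd h (not_lt.2 ?_)
  unfold numCopies
  rw [← Set.ncard_image_of_injective {G' : G.Subgraph | Nonempty (G'.coe ≃g H)}
    (liftSubgraph_injective hle)]
  refine Set.ncard_le_ncard ?_ (Set.toFinite _)
  rintro K ⟨e⟩
  have hK : ¬ K.Adj u v := by
    intro hadj
    refine hcon ⟨fun a => (e.symm a).1, fun a b hab => e.symm.injective (Subtype.ext hab), ?_,
      e ⟨u, K.edge_vert hadj⟩, e ⟨v, K.edge_vert hadj.symm⟩, ?_, by simp, by simp⟩
    · intro c d hcd
      have h1 : K.coe.Adj (e.symm c) (e.symm d) := e.symm.map_rel_iff.2 hcd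
      rcases K.adj_sub h1 with h2 | h2
      · exact Or.inl h2
      · exact Or.inr ((SimpleGraph.fromEdgeSet_adj _).1 h2).1
    · exact e.map_rel_iff.2 hadj
  refine ⟨⟨K.verts, K.Adj, ?_, K.edge_vert, K.symm⟩, ⟨e⟩, rfl⟩
  intro x y hxy
  rcases K.adj_sub hxy with h2 | h2
  · exact h2
  · have h3 : s(x, y) = s(u, v) := ((SimpleGraph.fromEdgeSet_adj _).1 h2).1
    rcases Sym2.eq_iff.1 h3 with ⟨rfl, rfl⟩ | ⟨rfl, rfl⟩
    · exact absurd hxy hK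
    · exact absurd hxy.symm hK

/-- Every edge added in one step comes from an injection of `H` that uses it. -/
lemma exists_map_of_bootStep [Finite β] {H : SimpleGraph α} {G : SimpleGraph β} {u v : β}
    (h : (bootStep H G).Adj u v) (hG : ¬ G.Adj u v) :
    ∃ f : α → β, Function.Injective f ∧
      (∀ c d, H.Adj c d → G.Adj (f c) (f d) ∨ s(f c, f d) = s(u, v)) ∧
      ∃ a b, H.Adj a b ∧ f a = u ∧ f b = v := by
  rcases h with h | h
  · exact absurd h hG
  obtain ⟨-, h | h⟩ := (SimpleGraph.fromRel_adj _ _ _).1 h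
  · exact exists_map_of_numCopies_lt h
  · obtain ⟨f, hf, h1, a, b, hab, ha, hb⟩ := exists_map_of_numCopies_lt h
    refine ⟨f, hf, ?_, b, a, hab.symm, hb, ha⟩
    intro c d hcd
    rw [Sym2.eq_swap (a := u)]
    exact h1 c d hcd

lemma le_bootStep (H : SimpleGraph α) (G : SimpleGraph β) : G ≤ bootStep H G := le_sup_left

lemma bootProcess_mono (H : SimpleGraph α) (G : SimpleGraph β) :
    Monotone (bootProcess H G) :=
  monotone_nat_of_le_succ fun _ => le_bootStep _ _

/-- A non-stable step adds an edge, and hence yields an injection of `H` using it. -/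
lemma exists_map_of_ne [Finite β] {H : SimpleGraph α} {G : SimpleGraph β}
    (h : G ≠ bootStep H G) :
    ∃ f : α → β, Function.Injective f ∧ ∃ u v, ¬ G.Adj u v ∧
      (∀ c d, H.Adj c d → G.Adj (f c) (f d) ∨ s(f c, f d) = s(u, v)) ∧
      ∃ a b, H.Adj a b ∧ f a = u ∧ f b = v := by
  have h1 : ¬ bootStep H G ≤ G := fun h2 => h (le_antisymm (le_bootStep H G) h2)
  rw [SimpleGraph.le_iff_adj] at h1
  push Not at h1
  obtain ⟨u, v, huv, hG⟩ := h1
  obtain ⟨f, hf, h2, h3⟩ := exists_map_of_bootStep huv hG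
  exact ⟨f, hf, u, v, hG, h2, h3⟩

/-- On finitely many vertices, a process that is non-stable at times `0, …, m` runs for
more than `m` steps, and so `M_H > m`. -/
lemma lt_maxRunningTime {H : SimpleGraph α} {N m : ℕ} (G : SimpleGraph (Fin N))
    (h : ∀ j ≤ m, bootProcess H G j ≠ bootProcess H G (j + 1)) : m < maxRunningTime H N := by
  have hlt : m < runningTime H G := by
    have hne : {t | bootProcess H G t = bootProcess H G (t + 1)}.Nonempty := by
      by_contra hemp
      rw [Set.not_nonempty_iff_eq_empty, Set.eq_empty_iff_forall_notMem] at hemp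
      have hmono : StrictMono (bootProcess H G) :=
        strictMono_nat_of_lt_succ fun n =>
          lt_of_le_of_ne (bootProcess_mono H G (Nat.le_succ n)) (hemp n)
      exact not_injective_infinite_finite _ hmono.injective
    by_contra hcon
    exact h _ (not_lt.1 hcon) (Nat.sInf_mem hne)
  refine lt_of_lt_of_le hlt (le_csSup ?_ ⟨G, rfl⟩)
  exact (Set.finite_range (runningTime H : SimpleGraph (Fin N) → ℕ)).bddAbove

end Copies

/-! ### Rooted trees with a vertex cover -/

section Tree

variable {α : Type*}

/-- The data of a rooted tree used below: `d` is the distance to the root, adjacent vertices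
lie on consecutive levels, parents are unique, and `U` is a vertex cover each of whose
members has a child outside `U`. -/
structure RootedCover (T : SimpleGraph α) (U : Set α) (d : α → ℕ) : Prop where
  adj_cases : ∀ u v, T.Adj u v → d u = d v + 1 ∨ d v = d u + 1
  unique_parent : ∀ u v b, T.Adj u b → T.Adj v b → d u < d b → d v < d b → u = v
  cover : ∀ u v, T.Adj u v → u ∈ U ∨ v ∈ U
  child : ∀ v ∈ U, ∃ w, T.Adj v w ∧ d v < d w ∧ w ∉ U

lemma parent_unique_of_isTree {T : SimpleGraph α} (hT : T.IsTree) (z : α) {u v b : α}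
    (hu : T.Adj u b) (hv : T.Adj v b) (hdu : T.dist z u < T.dist z b)
    (hdv : T.dist z v < T.dist z b) : u = v := by
  -- Shortest paths to the two parents, extended to `b`, are both shortest paths to `b`.
  have key : ∀ x, T.Adj x b → T.dist z x < T.dist z b →
      ∃ q : T.Walk z b, q.IsPath ∧ q.penultimate = x := by
    intro x hx hdx
    obtain ⟨p, hp⟩ := hT.connected.exists_walk_length_eq_dist z x
    refine ⟨p.concat hx, Walk.isPath_of_length_eq_dist _ ?_, Walk.penultimate_concat p hx⟩
    rw [Walk.length_concat, hp]
    rcases hT.dist_eq_dist_add_one_of_adj z hx with h | h <;> omega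
  obtain ⟨q, hq, rfl⟩ := key u hu hdu
  obtain ⟨r, hr, rfl⟩ := key v hv hdv
  rw [(hT.existsUnique_path z b).unique hq hr]

/-- If `A` misses a vertex of `U` and `|A| ≤ |U| + k`, then `T - A` still has a vertex of `U`
with at least `δ - 1 - k` neighbours outside `U`. Otherwise each `u ∈ U \ A` has `k + 2`
neighbours in `A \ U`, hence a child in `A \ U`; counting all of them for a topmost such `u`,
and one element of `A` in `{v} ∪ {children of v outside U}` for each other `v ∈ U`, gives
`|A| ≥ |U| + k + 1`. -/
lemma RootedCover.exists_large_degree [Finite α] {T : SimpleGraph α} {U : Set α} {d : α → ℕ}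
    (R : RootedCover T U d) {δ k : ℕ} (hδ : ∀ u ∈ U, δ ≤ (T.neighborSet u \ U).ncard)
    {A : Set α} (hA : A.ncard ≤ U.ncard + k) (hUA : ¬ U ⊆ A) :
    ∃ u ∈ U, u ∉ A ∧ δ ≤ ((T.neighborSet u \ U) \ A).ncard + 1 + k := by
  classical
  by_contra! hcon
  have hbig : ∀ u ∈ U, u ∉ A → k + 2 ≤ ((T.neighborSet u \ U) ∩ A).ncard := by
    intro u hu huA
    have h1 := hcon u hu huA
    have h2 := hδ u hu
    have h3 := Set.ncard_inter_add_ncard_sdiff_eq_ncard (T.neighborSet u \ U) A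
    omega
  have hrep : ∀ u, ∃ a, u ∈ U →
      a ∈ A ∧ (u ∈ A → a = u) ∧ (u ∉ A → T.Adj u a ∧ d u < d a ∧ a ∉ U) := by
    intro u
    by_cases huA : u ∈ A
    · exact ⟨u, fun _ => ⟨huA, fun _ => rfl, fun h => absurd huA h⟩⟩
    by_cases hu : u ∈ U
    · have h1 : 1 < ((T.neighborSet u \ U) ∩ A).ncard := by
        have := hbig u hu huA
        omega
      obtain ⟨a, b, ha, hb, hab⟩ := (Set.one_lt_ncard_iff (Set.toFinite _)).1 h1
      by_cases hda : d u < d a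
      · exact ⟨a, fun _ => ⟨ha.2, fun h => absurd h huA, fun _ => ⟨ha.1.1, hda, ha.1.2⟩⟩⟩
      by_cases hdb : d u < d b
      · exact ⟨b, fun _ => ⟨hb.2, fun h => absurd h huA, fun _ => ⟨hb.1.1, hdb, hb.1.2⟩⟩⟩
      have hua : T.Adj u a := ha.1.1
      have hub : T.Adj u b := hb.1.1
      exact absurd (R.unique_parent a b u hua.symm hub.symm
        (by rcases R.adj_cases _ _ hua with h | h <;> omega)
        (by rcases R.adj_cases _ _ hub with h | h <;> omega)) hab
    · exact ⟨u, fun h => absurd h hu⟩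
  choose a ha using hrep
  have hinj : U.InjOn a := by
    intro u hu v hv huv
    obtain ⟨-, hu1, hu2⟩ := ha u hu
    obtain ⟨-, hv1, hv2⟩ := ha v hv
    by_cases huA : u ∈ A <;> by_cases hvA : v ∈ A
    · rw [← hu1 huA, ← hv1 hvA, huv]
    · exact absurd hu (by rw [← hu1 huA, huv]; exact (hv2 hvA).2.2)
    · exact absurd hv (by rw [← hv1 hvA, ← huv]; exact (hu2 huA).2.2)
    · have h1 := hu2 huA
      have h2 := hv2 hvA
      rw [huv] at h1
      exact R.unique_parent _ _ _ h1.1 h2.1 h1.2.1 h2.2.1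
  have hne : (U \ A).Nonempty := by
    obtain ⟨u, hu, huA⟩ := Set.not_subset.1 hUA
    exact ⟨u, hu, huA⟩
  obtain ⟨u, ⟨hu, huA⟩, hmin⟩ := Set.exists_min_image (U \ A) d (Set.toFinite _) hne
  have hdisj : Disjoint (a '' (U \ {u})) ((T.neighborSet u \ U) ∩ A) := by
    rw [Set.disjoint_left]
    rintro _ ⟨v, ⟨hv, hvu⟩, rfl⟩ ⟨⟨hadj, hnU⟩, -⟩
    obtain ⟨-, hv1, hv2⟩ := ha v hv
    by_cases hvA : v ∈ A
    · exact hnU (by rw [hv1 hvA]; exact hv)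
    obtain ⟨h1, h2, -⟩ := hv2 hvA
    have h3 := hmin v ⟨hv, hvA⟩
    exact hvu (R.unique_parent _ _ _ h1 hadj h2 (by omega))
  have hsub : a '' (U \ {u}) ∪ ((T.neighborSet u \ U) ∩ A) ⊆ A := by
    rintro _ (⟨v, ⟨hv, -⟩, rfl⟩ | h)
    · exact (ha v hv).1
    · exact h.2
  have hcard := Set.ncard_le_ncard hsub (Set.toFinite _)
  rw [Set.ncard_union_eq hdisj (Set.toFinite _) (Set.toFinite _),
    (hinj.mono Set.sdiff_subset).ncard_image] at hcard
  have h1 := Set.ncard_sdiff_singleton_add_one hu (Set.toFinite _)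
  have h2 := hbig u hu huA
  omega

/-- Induction from the bottom of the tree, two levels at a time: if the statement for `v ∈ U`
follows from the statement, one time step earlier, for the vertices of `U` that share a child
outside `U` with `v`, then after `⌈h / 2⌉` steps it holds on all of `U`. -/
lemma RootedCover.propagate {T : SimpleGraph α} {U : Set α} {d : α → ℕ}
    (R : RootedCover T U d) {h : ℕ} (hd : ∀ v, d v ≤ h) (Q : ℕ → α → Prop)
    (step : ∀ j, ∀ v ∈ U, ∀ b, b ∉ U → T.Adj v b →
      (∀ a ∈ U, a ≠ v → T.Adj a b → Q j a) → Q (j + 1) v) :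
    ∀ v ∈ U, Q ((h + 1) / 2) v := by
  have key : ∀ j, ∀ v ∈ U, h ≤ d v + 2 * j → Q j v := by
    intro j
    induction j with
    | zero =>
      intro v hv hj
      obtain ⟨w, -, hw, -⟩ := R.child v hv
      have := hd w
      omega
    | succ j ih =>
      intro v hv hj
      obtain ⟨b, hvb, hdb, hb⟩ := R.child v hv
      refine step j v hv b hb hvb fun a haU hav hab => ih a haU ?_
      -- `v` is the only parent of `b`, so `a` is two levels below `v`.
      have h1 : ¬ d a < d b := fun hlt => hav (R.unique_parent _ _ _ hab hvb hlt hdb)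
      rcases R.adj_cases _ _ hab with h2 | h2 <;> omega
  intro v hv
  exact key _ v hv (by omega)

end Tree

/-! ### Embeddings that force an edge -/

section Steps

variable {α β : Type*}

/-- An injection of `D` into `R` sending a prescribed part `D'` into a prescribed part `Z`. -/
lemma exists_injOn_mapsTo [Finite α] [Finite β] [Nonempty β] {D D' : Set α} {R Z : Set β}
    (hD : D' ⊆ D) (hZ : Z ⊆ R) (h1 : D'.ncard ≤ Z.ncard) (h2 : D.ncard ≤ R.ncard) :
    ∃ g : α → β, D.InjOn g ∧ (∀ c ∈ D, g c ∈ R) ∧ ∀ c ∈ D', g c ∈ Z := by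
  classical
  have key : ∀ (A : Set α) (B : Set β), A.ncard ≤ B.ncard →
      ∃ g : α → β, A ⊆ g ⁻¹' B ∧ A.InjOn g := by
    intro A B hAB
    refine Set.Finite.exists_injOn_of_encard_le (Set.toFinite _) ?_
    rw [← (Set.toFinite A).cast_ncard_eq, ← (Set.toFinite B).cast_ncard_eq]
    exact_mod_cast hAB
  obtain ⟨g1, hg1, hi1⟩ := key D' Z h1
  have hsub : g1 '' D' ⊆ R := by
    rintro _ ⟨c, hc, rfl⟩
    exact hZ (hg1 hc)
  obtain ⟨g2, hg2, hi2⟩ := key (D \ D') (R \ g1 '' D') (by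
    rw [Set.ncard_sdiff hD, Set.ncard_sdiff hsub, hi1.ncard_image]
    omega)
  refine ⟨fun c => if c ∈ D' then g1 c else g2 c, ?_, ?_, ?_⟩
  · intro c hc e he hce
    by_cases h3 : c ∈ D' <;> by_cases h4 : e ∈ D' <;> simp only [h3, h4, if_true, if_false] at hce
    · exact hi1 h3 h4 hce
    · exact absurd ⟨c, h3, hce⟩ (hg2 ⟨he, h4⟩).2
    · exact absurd ⟨e, h4, hce.symm⟩ (hg2 ⟨hc, h3⟩).2
    · exact hi2 ⟨hc, h3⟩ ⟨he, h4⟩ hce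
  · intro c hc
    by_cases h3 : c ∈ D'
    · simp only [h3, if_true]; exact hZ (hg1 h3)
    · simp only [h3, if_false]; exact (hg2 ⟨hc, h3⟩).1
  · intro c hc
    simp only [hc, if_true]
    exact hg1 hc

/-- The edge `p v – w` is added when `T` can be embedded using only that edge as a new one:
`U` is placed by `p`, the vertex `b ∉ U` adjacent to `v` goes to `w`, and the remaining
vertices outside `U` are placed by `g`. -/
lemma bootStep_of_piecewise [Finite β] {T : SimpleGraph α} {U : Set α} {d : α → ℕ}
    (R : RootedCover T U d) {G : SimpleGraph β} {p g : α → β} {v b : α} {w : β}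
    (hv : v ∈ U) (hb : b ∉ U) (hvb : T.Adj v b)
    (hp : U.InjOn p) (hg : (Uᶜ \ {b}).InjOn g)
    (hpg : ∀ a ∈ U, ∀ c, c ∉ U → c ≠ b → p a ≠ g c) (hpw : ∀ a ∈ U, p a ≠ w)
    (hgw : ∀ c, c ∉ U → c ≠ b → g c ≠ w)
    (h1 : ∀ a ∈ U, ∀ c ∈ U, T.Adj a c → G.Adj (p a) (p c))
    (h2 : ∀ a ∈ U, ∀ c, c ∉ U → c ≠ b → T.Adj a c → G.Adj (p a) (g c))
    (h3 : ∀ a ∈ U, a ≠ v → T.Adj a b → G.Adj (p a) w) :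
    (bootStep T G).Adj (p v) w := by
  classical
  let f : α → β := fun a => if a ∈ U then p a else if a = b then w else g a
  have fU : ∀ a, a ∈ U → f a = p a := fun a ha => if_pos ha
  have fb : f b = w := by simp [f, hb]
  have fg : ∀ a, a ∉ U → a ≠ b → f a = g a := fun a ha hab => by simp [f, ha, hab]
  have hf : Function.Injective f := by
    intro a c hac
    by_cases ha : a ∈ U <;> by_cases hc : c ∈ U
    · rw [fU a ha, fU c hc] at hac
      exact hp ha hc hac
    · rw [fU a ha] at hac
      by_cases hcb : c = b
      · subst hcb
        rw [fb] at hac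
        exact absurd hac (hpw a ha)
      · rw [fg c hc hcb] at hac
        exact absurd hac (hpg a ha c hc hcb)
    · rw [fU c hc] at hac
      by_cases hab : a = b
      · subst hab
        rw [fb] at hac
        exact absurd hac.symm (hpw c hc)
      · rw [fg a ha hab] at hac
        exact absurd hac.symm (hpg c hc a ha hab)
    · by_cases hab : a = b <;> by_cases hcb : c = b
      · rw [hab, hcb]
      · rw [hab, fb, fg c hc hcb] at hac
        exact absurd hac.symm (hgw c hc hcb)
      · rw [hcb, fb, fg a ha hab] at hac
        exact absurd hac (hgw a ha hab)
      · rw [fg a ha hab, fg c hc hcb] at hac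
        exact hg ⟨ha, hab⟩ ⟨hc, hcb⟩ hac
  have hmain : ∀ a c, a ∈ U → T.Adj a c → G.Adj (f a) (f c) ∨ s(f a, f c) = s(f v, f b) := by
    intro a c ha hac
    by_cases hc : c ∈ U
    · rw [fU a ha, fU c hc]
      exact Or.inl (h1 a ha c hc hac)
    by_cases hcb : c = b
    · subst hcb
      by_cases hav : a = v
      · subst hav
        exact Or.inr rfl
      · rw [fU a ha, fb]
        exact Or.inl (h3 a ha hav hac)
    · rw [fU a ha, fg c hc hcb]
      exact Or.inl (h2 a ha c hc hcb hac)
  have := bootStep_of_map (G := G) hf hvb (fun a c hac => by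
    rcases R.cover a c hac with ha | hc
    · exact hmain a c ha hac
    · rcases hmain c a hc hac.symm with h4 | h4
      · exact Or.inl h4.symm
      · exact Or.inr (by rw [Sym2.eq_swap]; exact h4))
  rwa [fU v hv, fb] at this

/-- Place `U` by `p` and the rest of `T` in a set `X` to which `p '' (U \ {u})` is complete.
If `p u` has at least `|N_T(u) \ U| - 1` neighbours in `X`, it is joined to all of `X`. -/
lemma bootStep_of_degree [Finite α] [Finite β] {T : SimpleGraph α} {U : Set α} {d : α → ℕ}
    (R : RootedCover T U d) {G : SimpleGraph β} {p : α → β} {u : α} (hu : u ∈ U)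
    (hp : U.InjOn p) (h1 : ∀ a ∈ U, ∀ c ∈ U, T.Adj a c → G.Adj (p a) (p c)) {X : Set β}
    (hpX : ∀ a ∈ U, p a ∉ X) (hcard : Uᶜ.ncard ≤ X.ncard)
    (h2 : ∀ a ∈ U, a ≠ u → ∀ r ∈ X, G.Adj (p a) r)
    (hdeg : (T.neighborSet u \ U).ncard ≤ (X ∩ G.neighborSet (p u)).ncard + 1)
    {w : β} (hw : w ∈ X) : (bootStep T G).Adj (p u) w := by
  classical
  by_cases hadj : G.Adj (p u) w
  · exact le_bootStep T G hadj
  obtain ⟨b, hub, -, hb⟩ := R.child u hu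
  have hbN : b ∈ T.neighborSet u \ U := ⟨hub, hb⟩
  have : Nonempty β := ⟨w⟩
  obtain ⟨g, hg, hgX, hgN⟩ := exists_injOn_mapsTo (D := Uᶜ \ {b})
    (D' := (T.neighborSet u \ U) \ {b}) (R := X \ {w}) (Z := X ∩ G.neighborSet (p u))
    (fun c hc => ⟨hc.1.2, hc.2⟩)
    (fun x hx => ⟨hx.1, by rintro rfl; exact hadj hx.2⟩)
    (by rw [Set.ncard_sdiff_singleton_of_mem hbN]; omega)
    (by
      rw [Set.ncard_sdiff_singleton_of_mem hw, Set.ncard_sdiff_singleton_of_mem (show b ∈ Uᶜ from hb)]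
      omega)
  refine bootStep_of_piecewise R (p := p) (g := g) hu hb hub hp hg ?_ ?_ ?_ h1 ?_ ?_
  · intro a ha c hc hcb he
    exact hpX a ha (he ▸ (hgX c ⟨hc, hcb⟩).1)
  · rintro a ha rfl
    exact hpX a ha hw
  · intro c hc hcb
    exact (hgX c ⟨hc, hcb⟩).2
  · intro a ha c hc hcb hac
    by_cases hau : a = u
    · subst hau
      exact (hgN c ⟨⟨hac, hc⟩, hcb⟩).2
    · exact h2 a ha hau _ (hgX c ⟨hc, hcb⟩).1
  · intro a ha hau _
    exact h2 a ha hau w hw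

end Steps

/-! ### Dominating sets and universal vertices -/

section Growth

variable {α β : Type*}

/-- In `K`, the map `φ` embeds `T[U]`, and every vertex of `φ '' U` is adjacent to every vertex
outside `φ '' U`. -/
structure Dominates (T : SimpleGraph α) (U : Set α) (φ : α → β) (K : SimpleGraph β) : Prop where
  inj : U.InjOn φ
  edges : ∀ a ∈ U, ∀ c ∈ U, T.Adj a c → K.Adj (φ a) (φ c)
  out : ∀ v ∈ U, ∀ w, w ∉ φ '' U → K.Adj (φ v) w

lemma Dominates.mono {T : SimpleGraph α} {U : Set α} {φ : α → β} {K L : SimpleGraph β}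
    (D : Dominates T U φ K) (h : K ≤ L) : Dominates T U φ L :=
  ⟨D.inj, fun a ha c hc hac => h (D.edges a ha c hc hac), fun v hv w hw => h (D.out v hv w hw)⟩

/-- The vertices adjacent to all others. -/
def univSet (K : SimpleGraph β) : Set β := {v | ∀ w, w ≠ v → K.Adj v w}

lemma univSet_mono {K L : SimpleGraph β} (h : K ≤ L) : univSet K ⊆ univSet L :=
  fun _ hv w hw => h (hv w hw)

/-- If a first edge is ever added, then after `1 + 2⌈h / 2⌉` steps some image of `U` dominates.
The first step provides a copy `φ` of `T`. During the next `⌈h / 2⌉` steps the images of `U`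
become adjacent to everything outside `φ '' V(T)`, from the bottom of the tree upwards, by moving
one vertex of `V(T) \ U` away. Then `V(T) \ U` can be embedded outside `φ '' V(T)`, and another
`⌈h / 2⌉` steps settle the vertices of `φ '' (V(T) \ U)`. -/
lemma RootedCover.exists_dominates [Finite α] [Finite β] {T : SimpleGraph α} {U : Set α}
    {d : α → ℕ} (R : RootedCover T U d) {h : ℕ} (hd : ∀ v, d v ≤ h) {G : SimpleGraph β}
    (hn : 2 * Nat.card α ≤ Nat.card β) (hG : G ≠ bootStep T G) :
    ∃ φ : α → β, Dominates T U φ (bootProcess T G (1 + 2 * ((h + 1) / 2))) := by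
  classical
  obtain ⟨φ, hφ, u, v, -, hedge, a0, b0, hab0, rfl, rfl⟩ := exists_map_of_ne hG
  have hφ1 : ∀ c e, T.Adj c e → (bootProcess T G 1).Adj (φ c) (φ e) := by
    intro c e hce
    rcases hedge c e hce with h1 | h1
    · exact le_bootStep T G h1
    · have h2 : (bootStep T G).Adj (φ a0) (φ b0) := bootStep_of_map hφ hab0 hedge
      rcases Sym2.eq_iff.1 h1 with ⟨h3, h4⟩ | ⟨h3, h4⟩
      · rw [h3, h4]; exact h2
      · rw [h3, h4]; exact h2.symm
  have hφi : ∀ i, ∀ c e, T.Adj c e → (bootProcess T G (1 + i)).Adj (φ c) (φ e) :=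
    fun i c e hce => bootProcess_mono T G (Nat.le_add_right 1 i) (hφ1 c e hce)
  have hout : ∀ v ∈ U, ∀ w, w ∉ Set.range φ →
      (bootProcess T G (1 + (h + 1) / 2)).Adj (φ v) w := by
    refine R.propagate hd (fun j v => ∀ w, w ∉ Set.range φ →
      (bootProcess T G (1 + j)).Adj (φ v) w) ?_
    intro j v hv b hb hvb hQ w hw
    refine bootStep_of_piecewise R (G := bootProcess T G (1 + j)) (p := φ) (g := φ) hv hb hvb
      hφ.injOn hφ.injOn ?_ ?_ ?_ ?_ ?_ ?_
    · rintro a ha c hc - he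
      exact hc (hφ he ▸ ha)
    · rintro a - rfl
      exact hw ⟨a, rfl⟩
    · rintro c - - rfl
      exact hw ⟨c, rfl⟩
    · exact fun a _ c _ hac => hφi j a c hac
    · exact fun a _ c _ _ hac => hφi j a c hac
    · exact fun a ha hav hab => hQ a ha hav hab w hw
  have hne : Nonempty β := ⟨φ a0⟩
  obtain ⟨g, hg, hgX, -⟩ := exists_injOn_mapsTo (D := Uᶜ) (D' := ∅) (R := (Set.range φ)ᶜ)
    (Z := ∅) (Set.empty_subset _) (Set.empty_subset _) (by simp) (by
      have h1 := Set.ncard_add_ncard_compl U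
      have h2 := Set.ncard_add_ncard_compl (Set.range φ)
      have h3 : (Set.range φ).ncard = Nat.card α := Nat.card_range_of_injective hφ
      omega)
  refine ⟨φ, hφ.injOn, fun a _ c _ hac => hφi _ a c hac, ?_⟩
  have hlast : ∀ v ∈ U, ∀ w, w ∉ φ '' U →
      (bootProcess T G (1 + (h + 1) / 2 + (h + 1) / 2)).Adj (φ v) w := by
    refine R.propagate hd (fun j v => ∀ w, w ∉ φ '' U →
      (bootProcess T G (1 + (h + 1) / 2 + j)).Adj (φ v) w) ?_
    intro j v hv b hb hvb hQ w hw
    have hout' : ∀ v ∈ U, ∀ w, w ∉ Set.range φ →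
        (bootProcess T G (1 + (h + 1) / 2 + j)).Adj (φ v) w :=
      fun v hv w hw => bootProcess_mono T G (Nat.le_add_right _ j) (hout v hv w hw)
    by_cases hwr : w ∈ Set.range φ
    · refine bootStep_of_piecewise R (G := bootProcess T G (1 + (h + 1) / 2 + j)) (p := φ)
        (g := g) hv hb hvb hφ.injOn (hg.mono Set.sdiff_subset) ?_ ?_ ?_ ?_ ?_ ?_
      · intro a _ c hc _ he
        exact hgX c hc ⟨a, he⟩
      · rintro a ha rfl
        exact hw ⟨a, ha, rfl⟩
      · rintro c hc - rfl
        exact hgX c hc hwr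
      · intro a _ c _ hac
        rw [add_assoc]
        exact hφi _ a c hac
      · exact fun a ha c hc _ _ => hout' a ha _ (hgX c hc)
      · exact fun a ha hav hab => hQ a ha hav hab w hw
    · exact le_bootStep _ _ (hout' v hv w hwr)
  rwa [two_mul, ← add_assoc]

/-- With a dominating image of `U`, a further vertex `x` having `δ - 1` neighbours outside
`φ '' U` becomes universal: it can take the place of `φ u`, where `u ∈ U` has exactly `δ`
neighbours outside `U`. -/
lemma Dominates.mem_univSet [Finite α] [Finite β] {T : SimpleGraph α} {U : Set α} {d : α → ℕ}
    (R : RootedCover T U d) {φ : α → β} {K : SimpleGraph β} (D : Dominates T U φ K)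
    (hn : 2 * Nat.card α ≤ Nat.card β) {u : α} (hu : u ∈ U) {x : β} (hx : x ∉ φ '' U)
    (hdeg : (T.neighborSet u \ U).ncard ≤ (K.neighborSet x \ φ '' U).ncard + 1) :
    x ∈ univSet (bootStep T K) := by
  classical
  intro w hwx
  by_cases hw : w ∈ φ '' U
  · obtain ⟨a, ha, rfl⟩ := hw
    exact le_bootStep T K (D.out a ha x hx).symm
  have hpu : Function.update φ u x u = x := Function.update_self ..
  have hpa : ∀ a, a ≠ u → Function.update φ u x a = φ a :=
    fun a ha => Function.update_of_ne ha ..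
  have hxφ : ∀ a ∈ U, φ a ≠ x := fun a ha he => hx ⟨a, ha, he⟩
  have hcard : (φ '' U).ncard = U.ncard := D.inj.ncard_image
  have h := bootStep_of_degree R (G := K) (p := Function.update φ u x) (X := (insert x (φ '' U))ᶜ)
    hu ?_ ?_ ?_ ?_ ?_ ?_ (w := w) ?_
  · rwa [hpu] at h
  · intro a ha c hc hac
    by_cases hau : a = u <;> by_cases hcu : c = u
    · rw [hau, hcu]
    · rw [hau, hpu, hpa c hcu] at hac
      exact absurd hac.symm (hxφ c hc)
    · rw [hcu, hpu, hpa a hau] at hac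
      exact absurd hac (hxφ a ha)
    · rw [hpa a hau, hpa c hcu] at hac
      exact D.inj ha hc hac
  · intro a ha c hc hac
    by_cases hau : a = u
    · subst hau
      rw [hpu, hpa c hac.ne']
      exact (D.out c hc x hx).symm
    · by_cases hcu : c = u
      · subst hcu
        rw [hpu, hpa a hau]
        exact D.out a ha x hx
      · rw [hpa a hau, hpa c hcu]
        exact D.edges a ha c hc hac
  · intro a ha hmem
    by_cases hau : a = u
    · rw [hau, hpu] at hmem
      exact hmem (Set.mem_insert _ _)
    · rw [hpa a hau] at hmem
      exact hmem (Set.mem_insert_of_mem _ ⟨a, ha, rfl⟩)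
  · have h1 := Set.ncard_add_ncard_compl U
    have h2 := Set.ncard_add_ncard_compl (insert x (φ '' U))
    have h3 := Set.ncard_insert_of_notMem hx
    have h4 : 0 < Nat.card α := @Nat.card_pos _ ⟨u⟩ _
    omega
  · intro a ha hau r hr
    rw [hpa a hau]
    exact D.out a ha r fun h => hr (Set.mem_insert_of_mem _ h)
  · rw [hpu]
    refine hdeg.trans (Nat.add_le_add_right (Set.ncard_le_ncard ?_ (Set.toFinite _)) 1)
    rintro y ⟨hy, hyU⟩
    refine ⟨?_, hy⟩
    rintro (rfl | h)
    · exact K.loopless.irrefl _ hy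
    · exact hyU h
  · rintro (h | h)
    · exact hwx h
    · exact hw h

/-- Once a universal vertex `x` outside `φ '' U` exists, `⌈h / 2⌉` further steps make all of
`φ '' U` universal: to join `φ v` to `φ u`, let `x` play the role of `u` and move a child of `v`
to `φ u`. -/
lemma Dominates.subset_univSet [Finite α] [Finite β] {T : SimpleGraph α} {U : Set α} {d : α → ℕ}
    (R : RootedCover T U d) {h : ℕ} (hd : ∀ v, d v ≤ h) {φ : α → β} {G : SimpleGraph β} {i : ℕ}
    (D : Dominates T U φ (bootProcess T G i)) (hn : 2 * Nat.card α ≤ Nat.card β)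
    {x : β} (hx : x ∉ φ '' U) (hxu : x ∈ univSet (bootProcess T G i)) :
    φ '' U ⊆ univSet (bootProcess T G (i + (h + 1) / 2)) := by
  classical
  have hmain : ∀ v ∈ U, ∀ u ∈ U, u ≠ v →
      (bootProcess T G (i + (h + 1) / 2)).Adj (φ v) (φ u) := by
    refine R.propagate hd (fun j v => ∀ u ∈ U, u ≠ v →
      (bootProcess T G (i + j)).Adj (φ v) (φ u)) ?_
    intro j v hv b hb hvb hQ u hu huv
    have hle : bootProcess T G i ≤ bootProcess T G (i + j) :=
      bootProcess_mono T G (Nat.le_add_right i j)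
    have Dj := D.mono hle
    have hxj : ∀ w, w ≠ x → (bootProcess T G (i + j)).Adj x w := univSet_mono hle hxu
    have hpu : Function.update φ u x u = x := Function.update_self ..
    have hpa : ∀ a, a ≠ u → Function.update φ u x a = φ a :=
      fun a ha => Function.update_of_ne ha ..
    have hxφ : ∀ a ∈ U, φ a ≠ x := fun a ha he => hx ⟨a, ha, he⟩
    have hcard : (φ '' U).ncard = U.ncard := D.inj.ncard_image
    have hne : Nonempty β := ⟨x⟩
    obtain ⟨g, hg, hgX, -⟩ := exists_injOn_mapsTo (D := Uᶜ) (D' := ∅)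
      (R := (insert x (φ '' U))ᶜ)
      (Z := ∅) (Set.empty_subset _) (Set.empty_subset _) (by simp) (by
        have h1 := Set.ncard_add_ncard_compl U
        have h2 := Set.ncard_add_ncard_compl (insert x (φ '' U))
        have h3 := Set.ncard_insert_of_notMem hx
        have h4 : 0 < Nat.card α := @Nat.card_pos _ ⟨u⟩ _
        omega)
    have hgx : ∀ c, c ∉ U → g c ≠ x := fun c hc he => hgX c hc (he ▸ Set.mem_insert _ _)
    have hgφ : ∀ c, c ∉ U → g c ∉ φ '' U :=
      fun c hc he => hgX c hc (Set.mem_insert_of_mem _ he)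
    have h := bootStep_of_piecewise R (G := bootProcess T G (i + j))
      (p := Function.update φ u x) (g := g) (w := φ u) hv hb hvb ?_ (hg.mono Set.sdiff_subset)
      ?_ ?_ ?_ ?_ ?_ ?_
    · rwa [hpa v huv.symm] at h
    · intro a ha c hc hac
      by_cases hau : a = u <;> by_cases hcu : c = u
      · rw [hau, hcu]
      · rw [hau, hpu, hpa c hcu] at hac
        exact absurd hac.symm (hxφ c hc)
      · rw [hcu, hpu, hpa a hau] at hac
        exact absurd hac (hxφ a ha)
      · rw [hpa a hau, hpa c hcu] at hac
        exact D.inj ha hc hac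
    · intro a ha c hc _ he
      by_cases hau : a = u
      · rw [hau, hpu] at he
        exact hgx c hc he.symm
      · rw [hpa a hau] at he
        exact hgφ c hc ⟨a, ha, he⟩
    · intro a ha he
      by_cases hau : a = u
      · rw [hau, hpu] at he
        exact hxφ u hu he.symm
      · rw [hpa a hau] at he
        exact hau (D.inj ha hu he)
    · exact fun c hc _ he => hgφ c hc ⟨u, hu, he.symm⟩
    · intro a ha c hc hac
      by_cases hau : a = u
      · subst hau
        rw [hpu, hpa c hac.ne']
        exact hxj _ (hxφ c hc)
      · by_cases hcu : c = u
        · subst hcu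
          rw [hpu, hpa a hau]
          exact (hxj _ (hxφ a ha)).symm
        · rw [hpa a hau, hpa c hcu]
          exact Dj.edges a ha c hc hac
    · intro a ha c hc _ _
      by_cases hau : a = u
      · rw [hau, hpu]
        exact hxj _ (hgx c hc)
      · rw [hpa a hau]
        exact Dj.out a ha _ (hgφ c hc)
    · intro a ha hav hab
      by_cases hau : a = u
      · rw [hau, hpu]
        exact hxj _ (hxφ u hu)
      · rw [hpa a hau]
        exact hQ a ha hav hab u hu (Ne.symm hau)
  rintro _ ⟨v, hv, rfl⟩ w hw
  by_cases hwU : w ∈ φ '' U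
  · obtain ⟨u, hu, rfl⟩ := hwU
    exact hmain v hv u hu fun h => hw (by rw [h])
  · exact bootProcess_mono T G (Nat.le_add_right i _) (D.out v hv w hwU)

/-- In a copy of `T` with at most one edge missing from `K`, a vertex loses at most one
neighbour. -/
lemma ncard_image_le_of_missing_edge [Finite α] {T : SimpleGraph α} {K : SimpleGraph β}
    {f : α → β} (hf : Function.Injective f) {u v : β}
    (hedge : ∀ c d, T.Adj c d → K.Adj (f c) (f d) ∨ s(f c, f d) = s(u, v)) {a : α} {B : Set α}
    (hB : B ⊆ T.neighborSet a) :
    B.ncard ≤ (f '' B ∩ K.neighborSet (f a)).ncard + 1 := by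
  have h1 := Set.ncard_inter_add_ncard_sdiff_eq_ncard (f '' B) (K.neighborSet (f a))
    (Set.toFinite _)
  have h2 : (f '' B \ K.neighborSet (f a)).ncard ≤ 1 := by
    refine (Set.ncard_le_one (Set.toFinite _)).2 ?_
    rintro _ ⟨⟨c, hc, rfl⟩, hcK⟩ _ ⟨⟨e, he, rfl⟩, heK⟩
    have h3 := (hedge a c (hB hc)).resolve_left hcK
    have h4 := (hedge a e (hB he)).resolve_left heK
    exact Sym2.congr_right.1 (h3.trans h4.symm)
  rw [Set.ncard_image_of_injective _ hf] at h1
  omega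

/-- A non-stable step from a graph with at least `|U|` universal vertices creates a new one. -/
lemma RootedCover.univSet_growth [Finite α] [Finite β] {T : SimpleGraph α} {U : Set α}
    {d : α → ℕ} (R : RootedCover T U d) {δ : ℕ}
    (hδ : ∀ u ∈ U, δ ≤ (T.neighborSet u \ U).ncard) {u : α} (hu : u ∈ U)
    (huδ : (T.neighborSet u \ U).ncard = δ) (hn : 2 * Nat.card α ≤ Nat.card β)
    {K : SimpleGraph β} (hK : K ≠ bootStep T K) (hs : U.ncard ≤ (univSet K).ncard) :
    (univSet K).ncard + 1 ≤ (univSet (bootStep T K)).ncard := by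
  classical
  obtain ⟨k, hk⟩ := Nat.exists_eq_add_of_le hs
  obtain ⟨f, hf, y, y', hyy, hedge, a0, b0, hab0, rfl, rfl⟩ := exists_map_of_ne hK
  have hne : f a0 ≠ f b0 := fun e => hab0.ne (hf e)
  have ha0 : f a0 ∉ univSet K := fun h => hyy (h _ hne.symm)
  have hb0 : f b0 ∉ univSet K := fun h => hyy (h _ hne).symm
  obtain ⟨u1, hu1, hu1A, hdeg⟩ := R.exists_large_degree hδ (k := k) (A := f ⁻¹' univSet K)
    (by
      rw [← hk, ← Set.ncard_image_of_injective _ hf]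
      exact Set.ncard_le_ncard (Set.image_preimage_subset _ _) (Set.toFinite _))
    (by
      intro hsub
      rcases R.cover _ _ hab0 with h | h
      · exact ha0 (hsub h)
      · exact hb0 (hsub h))
  set x := f u1 with hxdef
  have hxn : x ∉ univSet K := hu1A
  have hnb : ((T.neighborSet u1 \ U) \ f ⁻¹' univSet K).ncard ≤
      (K.neighborSet x \ univSet K).ncard + 1 := by
    refine (ncard_image_le_of_missing_edge hf hedge (a := u1)
      (fun c hc => hc.1.1)).trans (Nat.add_le_add_right (Set.ncard_le_ncard ?_ (Set.toFinite _)) 1)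
    rintro _ ⟨⟨c, hc, rfl⟩, hcK⟩
    exact ⟨hcK, hc.2⟩
  have hne : Nonempty β := ⟨x⟩
  have hsz := Set.ncard_sdiff_singleton_add_one hu (Set.toFinite _)
  obtain ⟨q, hq, hqX, -⟩ := exists_injOn_mapsTo (D := U \ {u}) (D' := ∅) (R := univSet K)
    (Z := ∅) (Set.empty_subset _) (Set.empty_subset _) (by simp) (by omega)
  have hpu : Function.update q u x u = x := Function.update_self ..
  have hpa : ∀ a, a ≠ u → Function.update q u x a = q a :=
    fun a ha => Function.update_of_ne ha ..
  have hqu : ∀ a ∈ U, a ≠ u → q a ∈ univSet K := fun a ha hau => hqX a ⟨ha, hau⟩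
  have hqx : ∀ a ∈ U, a ≠ u → q a ≠ x := fun a ha hau he => hxn (he ▸ hqu a ha hau)
  set p := Function.update q u x with hp
  have hpinj : U.InjOn p := by
    intro a ha c hc hac
    by_cases hau : a = u <;> by_cases hcu : c = u
    · rw [hau, hcu]
    · rw [hau, hpu, hpa c hcu] at hac
      exact absurd hac.symm (hqx c hc hcu)
    · rw [hcu, hpu, hpa a hau] at hac
      exact absurd hac (hqx a ha hau)
    · rw [hpa a hau, hpa c hcu] at hac
      exact hq ⟨ha, hau⟩ ⟨hc, hcu⟩ hac
  have hpK : ∀ a ∈ U, a ≠ u → ∀ r, r ≠ p a → K.Adj (p a) r := by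
    intro a ha hau r hr
    rw [hpa a hau] at hr ⊢
    exact hqu a ha hau r hr
  have hxnew : x ∈ univSet (bootStep T K) := by
    intro w hwx
    by_cases hw : w ∈ p '' U
    · obtain ⟨a, ha, rfl⟩ := hw
      have hau : a ≠ u := by
        rintro rfl
        exact hwx hpu
      exact le_bootStep T K (hpK a ha hau x hwx.symm).symm
    have h := bootStep_of_degree R (G := K) (p := p) (X := (p '' U)ᶜ) hu hpinj ?_ ?_ ?_ ?_ ?_ hw
    · rwa [hpu] at h
    · intro a ha c hc hac
      have hpac : p c ≠ p a := fun he => hac.ne (hpinj hc ha he).symm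
      by_cases hau : a = u
      · exact (hpK c hc (fun hcu => hac.ne (hau.trans hcu.symm)) _ hpac.symm).symm
      · exact hpK a ha hau _ hpac
    · exact fun a ha hmem => hmem ⟨a, ha, rfl⟩
    · have h1 := Set.ncard_add_ncard_compl U
      have h2 := Set.ncard_add_ncard_compl (p '' U)
      have h3 : (p '' U).ncard = U.ncard := hpinj.ncard_image
      omega
    · rintro a ha hau r hr
      exact hpK a ha hau r fun he => hr ⟨a, ha, he.symm⟩
    · -- The free universal vertices number `k + 1`; the remaining `δ - 2 - k` neighbours of `x`
      -- are not universal.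
      have hpim : p '' U = insert x (q '' (U \ {u})) := by
        ext r
        constructor
        · rintro ⟨a, ha, rfl⟩
          by_cases hau : a = u
          · rw [hau, hpu]; exact Set.mem_insert _ _
          · rw [hpa a hau]; exact Set.mem_insert_of_mem _ ⟨a, ⟨ha, hau⟩, rfl⟩
        · rintro (rfl | ⟨a, ⟨ha, hau⟩, rfl⟩)
          · exact ⟨u, hu, hpu⟩
          · exact ⟨a, ha, hpa a hau⟩
      have hsub : (K.neighborSet x \ univSet K) ∪ (univSet K \ q '' (U \ {u})) ⊆
          (p '' U)ᶜ ∩ K.neighborSet (p u) := by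
        rw [hpu, hpim]
        rintro r (⟨hr, hru⟩ | ⟨hr, hrq⟩)
        · refine ⟨?_, hr⟩
          rintro (rfl | ⟨a, ⟨ha, hau⟩, rfl⟩)
          · exact K.loopless.irrefl _ hr
          · exact hru (hqu a ha hau)
        · have hrx : r ≠ x := fun he => hxn (he ▸ hr)
          refine ⟨?_, (hr x hrx.symm).symm⟩
          rintro (he | he)
          · exact hrx he
          · exact hrq he
      have h1 := Set.ncard_le_ncard hsub (Set.toFinite _)
      have hqsub : q '' (U \ {u}) ⊆ univSet K := by
        rintro _ ⟨a, ⟨ha, hau⟩, rfl⟩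
        exact hqu a ha hau
      rw [Set.ncard_union_eq (Set.disjoint_left.2 fun r hr hr' => hr.2 hr'.1) (Set.toFinite _)
        (Set.toFinite _), Set.ncard_sdiff hqsub, hq.ncard_image] at h1
      omega
  have h1 := Set.ncard_insert_of_notMem hxn (Set.toFinite _)
  rw [← h1]
  refine Set.ncard_le_ncard ?_ (Set.toFinite _)
  rintro r (rfl | hr)
  · exact hxnew
  · exact univSet_mono (le_bootStep T K) hr

/-- Copies of `T[U]` inside a dominating `φ '' U` extend to copies of `T`, so on `φ '' U` the
`T`-process is at least as fast as the `T[U]`-process. -/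
lemma Dominates.bootStep_comap_le [Finite α] [Finite β] {T : SimpleGraph α} {U : Set α}
    {d : α → ℕ} (R : RootedCover T U d) {φ : α → β} {K : SimpleGraph β} (D : Dominates T U φ K)
    (hn : 2 * Nat.card α ≤ Nat.card β) {N : ℕ} (e : Fin N ≃ (φ '' U)) :
    bootStep (T.induce U) (K.comap fun i => (e i : β)) ≤
      (bootStep T K).comap fun i => (e i : β) := by
  classical
  intro i j hij
  by_cases hK : K.Adj (e i) (e j)
  · exact le_bootStep T K hK
  obtain ⟨F, hF, hedge, ⟨a, ha⟩, ⟨b, hb⟩, hab, rfl, rfl⟩ := exists_map_of_bootStep hij hK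
  have hne : Nonempty β := ⟨φ a⟩
  obtain ⟨g, hg, hgX, -⟩ := exists_injOn_mapsTo (D := Uᶜ) (D' := ∅) (R := (φ '' U)ᶜ)
    (Z := ∅) (Set.empty_subset _) (Set.empty_subset _) (by simp) (by
      have h1 := Set.ncard_add_ncard_compl U
      have h2 := Set.ncard_add_ncard_compl (φ '' U)
      have h3 : (φ '' U).ncard = U.ncard := D.inj.ncard_image
      omega)
  let f : α → β := fun c => if hc : c ∈ U then (e (F ⟨c, hc⟩) : β) else g c
  have fU : ∀ c (hc : c ∈ U), f c = e (F ⟨c, hc⟩) := fun c hc => dif_pos hc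
  have fg : ∀ c, c ∉ U → f c = g c := fun c hc => dif_neg hc
  have hout : ∀ c ∈ U, ∀ w, w ∉ φ '' U → K.Adj (f c) w := by
    intro c hc w hw
    rw [fU c hc]
    obtain ⟨c', hc', h⟩ := (e (F ⟨c, hc⟩)).2
    rw [← h]
    exact D.out c' hc' w hw
  have hf : Function.Injective f := by
    intro c c' hcc
    by_cases hc : c ∈ U <;> by_cases hc' : c' ∈ U
    · rw [fU c hc, fU c' hc'] at hcc
      exact congrArg Subtype.val (hF (e.injective (Subtype.ext hcc)))
    · rw [fU c hc, fg c' hc'] at hcc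
      exact absurd (hcc ▸ (e (F ⟨c, hc⟩)).2) (hgX c' hc')
    · rw [fU c' hc', fg c hc] at hcc
      exact absurd (hcc ▸ (e (F ⟨c', hc'⟩)).2) (hgX c hc)
    · rw [fg c hc, fg c' hc'] at hcc
      exact hg hc hc' hcc
  have h := bootStep_of_map (G := K) hf (a := a) (b := b) hab ?_
  · rw [fU a ha, fU b hb] at h
    exact h
  · intro c c' hcc
    by_cases hc : c ∈ U <;> by_cases hc' : c' ∈ U
    · rcases hedge ⟨c, hc⟩ ⟨c', hc'⟩ hcc with h1 | h1
      · rw [fU c hc, fU c' hc']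
        exact Or.inl h1
      · rw [fU c hc, fU c' hc', fU a ha, fU b hb]
        rcases Sym2.eq_iff.1 h1 with ⟨h2, h3⟩ | ⟨h2, h3⟩
        · rw [h2, h3]; exact Or.inr rfl
        · rw [h2, h3]; exact Or.inr Sym2.eq_swap
    · rw [fg c' hc']
      exact Or.inl (hout c hc _ (hgX c' hc'))
    · rw [fg c hc]
      exact Or.inl (hout c' hc' _ (hgX c hc)).symm
    · rcases R.cover _ _ hcc with h | h
      · exact absurd h hc
      · exact (hc' h).elim

/-- A step adding an edge either gives some vertex outside `φ '' U` at least `δ - 1` neighbours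
outside `φ '' U`, or the copy of `T` responsible for the edge has its copy of `U` exactly on
`φ '' U`, so that the edge is also added by the `T[U]`-process there. -/
lemma Dominates.new_edge [Finite α] [Finite β] {T : SimpleGraph α} {U : Set α}
    {d : α → ℕ} (R : RootedCover T U d) {δ : ℕ}
    (hδ : ∀ u ∈ U, δ ≤ (T.neighborSet u \ U).ncard) {φ : α → β} {K : SimpleGraph β}
    (D : Dominates T U φ K) {N : ℕ} (e : Fin N ≃ (φ '' U))
    (hno : ∀ x, x ∉ φ '' U → ¬ δ ≤ ((bootStep T K).neighborSet x \ φ '' U).ncard + 1)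
    {y y' : β} (hK : ¬ K.Adj y y') (hy : (bootStep T K).Adj y y') :
    ∃ i j, (e i : β) = y ∧ (e j : β) = y' ∧
      (bootStep (T.induce U) (K.comap fun i => (e i : β))).Adj i j := by
  classical
  obtain ⟨f, hf, hedge, a, b, hab, rfl, rfl⟩ := exists_map_of_bootStep hy hK
  have hφcard : (φ '' U).ncard = U.ncard := D.inj.ncard_image
  have hAcard : (f ⁻¹' (φ '' U)).ncard ≤ U.ncard := by
    rw [← hφcard, ← Set.ncard_image_of_injective _ hf]
    exact Set.ncard_le_ncard (Set.image_preimage_subset _ _) (Set.toFinite _)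
  have hUA : U ⊆ f ⁻¹' (φ '' U) := by
    by_contra hUA
    obtain ⟨u, hu, huA, hdeg⟩ := R.exists_large_degree hδ (k := 0) hAcard hUA
    refine hno (f u) huA (hdeg.trans (Nat.add_le_add_right ?_ 1))
    rw [← Set.ncard_image_of_injective _ hf]
    refine Set.ncard_le_ncard ?_ (Set.toFinite _)
    rintro _ ⟨c, ⟨⟨huc, -⟩, hcA⟩, rfl⟩
    refine ⟨?_, hcA⟩
    rcases hedge u c huc with h | h
    · exact le_bootStep T K h
    · rcases Sym2.eq_iff.1 h with ⟨h1, h2⟩ | ⟨h1, h2⟩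
      · change (bootStep T K).Adj (f u) (f c)
        rw [h1, h2]; exact hy
      · change (bootStep T K).Adj (f u) (f c)
        rw [h1, h2]; exact hy.symm
  have hAU : U = f ⁻¹' (φ '' U) := Set.eq_of_subset_of_ncard_le hUA hAcard (Set.toFinite _)
  have hfU : ∀ c, c ∈ U ↔ f c ∈ φ '' U := fun c => by
    conv_lhs => rw [hAU]
    rfl
  -- An edge between `φ '' U` and its complement would already be present.
  have hcross : ∀ c c', c ∈ U → c' ∉ U → K.Adj (f c) (f c') := by
    intro c c' hc hc'
    obtain ⟨v, hv, h⟩ := (hfU c).1 hc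
    rw [← h]
    exact D.out v hv _ fun h => hc' ((hfU c').2 h)
  have haU : a ∈ U := by
    by_contra haU
    exact hK (hcross b a ((R.cover _ _ hab).resolve_left haU) haU).symm
  have hbU : b ∈ U := by
    by_contra hbU
    exact hK (hcross a b haU hbU)
  let F : U → Fin N := fun c => e.symm ⟨f c, (hfU c).1 c.2⟩
  have hF : ∀ c : U, (e (F c) : β) = f c := fun c => by simp [F]
  have hFinj : Function.Injective F := by
    intro c c' hcc
    apply Subtype.ext
    apply hf
    rw [← hF c, ← hF c', hcc]
  refine ⟨F ⟨a, haU⟩, F ⟨b, hbU⟩, hF _, hF _, ?_⟩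
  refine bootStep_of_map hFinj (a := ⟨a, haU⟩) (b := ⟨b, hbU⟩) hab ?_
  intro c c' hcc
  rcases hedge c c' hcc with h | h
  · refine Or.inl ?_
    change K.Adj (e (F c)) (e (F c'))
    rw [hF, hF]
    exact h
  · refine Or.inr ?_
    rcases Sym2.eq_iff.1 h with ⟨h1, h2⟩ | ⟨h1, h2⟩
    · rw [show c = ⟨a, haU⟩ from Subtype.ext (hf h1), show c' = ⟨b, hbU⟩ from Subtype.ext (hf h2)]
    · rw [show c = ⟨b, hbU⟩ from Subtype.ext (hf h1), show c' = ⟨a, haU⟩ from Subtype.ext (hf h2)]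
      exact Sym2.eq_swap

/-- Within `M_{T[U]}(|U|) + 1` non-stable steps after `φ '' U` dominates, some vertex outside
`φ '' U` has `δ - 1` neighbours outside `φ '' U`; otherwise the process on `φ '' U` would be a
`T[U]`-process that runs for too long. -/
lemma Dominates.exists_degree [Finite α] [Finite β] {T : SimpleGraph α} {U : Set α}
    {d : α → ℕ} (R : RootedCover T U d) {δ : ℕ}
    (hδ : ∀ u ∈ U, δ ≤ (T.neighborSet u \ U).ncard) {φ : α → β} {G : SimpleGraph β} {i μ : ℕ}
    (D : Dominates T U φ (bootProcess T G i)) (hn : 2 * Nat.card α ≤ Nat.card β)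
    (hμ : maxRunningTime (T.induce U) U.ncard ≤ μ)
    (hne : ∀ j ≤ μ, bootProcess T G (i + j) ≠ bootProcess T G (i + j + 1)) :
    ∃ x, x ∉ φ '' U ∧
      δ ≤ ((bootProcess T G (i + μ + 1)).neighborSet x \ φ '' U).ncard + 1 := by
  classical
  by_contra hcon
  push Not at hcon
  have hno : ∀ j ≤ μ, ∀ x, x ∉ φ '' U →
      ¬ δ ≤ ((bootStep T (bootProcess T G (i + j))).neighborSet x \ φ '' U).ncard + 1 := by
    intro j hj x hx hle
    refine absurd (hcon x hx) (not_lt.2 (hle.trans (Nat.add_le_add_right ?_ 1)))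
    refine Set.ncard_le_ncard (Set.sdiff_subset_sdiff_left ?_) (Set.toFinite _)
    intro w hw
    exact bootProcess_mono T G (show i + j + 1 ≤ i + μ + 1 by omega) hw
  have hcard : Nat.card (φ '' U) = U.ncard := D.inj.ncard_image
  let e : Fin U.ncard ≃ (φ '' U) := (Finite.equivFinOfCardEq hcard).symm
  let L : ℕ → SimpleGraph (Fin U.ncard) :=
    fun j => (bootProcess T G (i + j)).comap fun k => (e k : β)
  have Dj : ∀ j, Dominates T U φ (bootProcess T G (i + j)) :=
    fun j => D.mono (bootProcess_mono T G (Nat.le_add_right i j))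
  have hstep : ∀ j ≤ μ, L (j + 1) = bootStep (T.induce U) (L j) := by
    intro j hj
    refine le_antisymm ?_ ((Dj j).bootStep_comap_le R hn e)
    intro k l hkl
    by_cases hK : (bootProcess T G (i + j)).Adj (e k) (e l)
    · exact le_bootStep _ _ hK
    · obtain ⟨k', l', hk, hl, h⟩ := (Dj j).new_edge R hδ e (hno j hj) hK hkl
      rw [← e.injective (Subtype.ext hk), ← e.injective (Subtype.ext hl)]
      exact h
  have hLne : ∀ j ≤ μ, L j ≠ L (j + 1) := by
    intro j hj heq
    refine hne j hj (le_antisymm (le_bootStep _ _) ?_)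
    intro y y' hy
    by_contra hK
    obtain ⟨k, l, rfl, rfl, h⟩ := (Dj j).new_edge R hδ e (hno j hj) hK hy
    have h2 : (L (j + 1)).Adj k l := by
      rw [hstep j hj]; exact h
    rw [← heq] at h2
    exact hK h2
  have hproc : ∀ j ≤ μ + 1, bootProcess (T.induce U) (L 0) j = L j := by
    intro j
    induction j with
    | zero => exact fun _ => rfl
    | succ j ih =>
      intro hj
      rw [hstep j (by omega), ← ih (by omega)]
      rfl
  refine absurd (lt_maxRunningTime (m := μ) (L 0) fun j hj => ?_) (not_lt.2 hμ)
  rw [hproc j (by omega), hproc (j + 1) (by omega)]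
  exact hLne j hj

end Growth

/-! ### The number of universal vertices -/

/-- Let `T` be a tree on `t` vertices rooted at a non-leaf `z`, and let
`U` be a minimum vertex cover of `T` containing no leaf such that `v ∈ U` iff `v` has a
child outside `U`. With `μ := M_{T[U]}(|U|)`, `δ := min_{u ∈ U} |N_T(u) \ U|` and
`i* := 1 + 3⌈height_z(T)/2⌉ + μ + δ`, if a `T`-bootstrap process on `n ≥ 2t` vertices
has not stabilised by time `i*`, then `G_{i*}` has at least `|U| + δ − 2` universal
vertices. -/
theorem many_universal_vertices {α V : Type} [Fintype α] [Fintype V]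
    (t : ℕ) (hα : Fintype.card α = t)
    (T : SimpleGraph α) (hT : T.IsTree) (z : α) (hz : (T.neighborSet z).ncard ≠ 1)
    (U : Set α)
    (hcover : ∀ u v : α, T.Adj u v → u ∈ U ∨ v ∈ U)
    (hmincover : ∀ W : Set α, (∀ u v : α, T.Adj u v → u ∈ W ∨ v ∈ W) → U.ncard ≤ W.ncard)
    (hnoleaf : ∀ u ∈ U, (T.neighborSet u).ncard ≠ 1)
    (hchild : ∀ v : α, v ∈ U ↔ ∃ w : α, T.Adj v w ∧ T.dist z v < T.dist z w ∧ w ∉ U)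
    (μ δ istar : ℕ)
    (hμ : μ = maxRunningTime (T.induce U) U.ncard)
    (hδ : δ = sInf {d : ℕ | ∃ u ∈ U, ((T.neighborSet u) \ U).ncard = d})
    (histar : istar = 1 + 3 * ((treeHeight T z + 1) / 2) + μ + δ)
    (G : SimpleGraph V) (hn : 2 * t ≤ Fintype.card V)
    (hτ : istar < runningTime T G) :
    U.ncard + δ - 2 ≤
      {v : V | ∀ w : V, w ≠ v → (bootProcess T G istar).Adj v w}.ncard := by
  classical
  rcases U.eq_empty_or_nonempty with rfl | hUne
  · have : δ = 0 := by simp [hδ]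
    simp [this]
  have R : RootedCover T U (T.dist z) :=
    ⟨fun u v huv => hT.dist_eq_dist_add_one_of_adj z huv,
      fun u v b hu hv h1 h2 => parent_unique_of_isTree hT z hu hv h1 h2, hcover,
      fun v hv => (hchild v).1 hv⟩
  have hd : ∀ v, T.dist z v ≤ treeHeight T z := fun v =>
    le_csSup (s := {d : ℕ | ∃ v : α, T.dist z v = d}) (Set.finite_range (T.dist z)).bddAbove ⟨v, rfl⟩
  have hn' : 2 * Nat.card α ≤ Nat.card V := by
    rw [Nat.card_eq_fintype_card, Nat.card_eq_fintype_card, hα]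
    exact hn
  obtain ⟨u, hu, huδ⟩ : ∃ u ∈ U, (T.neighborSet u \ U).ncard = δ := by
    obtain ⟨u, hu⟩ := hUne
    rw [hδ]
    exact Nat.sInf_mem (s := {d : ℕ | ∃ u ∈ U, ((T.neighborSet u) \ U).ncard = d}) ⟨_, u, hu, rfl⟩
  have hδle : ∀ v ∈ U, δ ≤ (T.neighborSet v \ U).ncard := fun v hv => by
    rw [hδ]
    exact Nat.sInf_le ⟨v, hv, rfl⟩
  have hns : ∀ i ≤ istar, bootProcess T G i ≠ bootProcess T G (i + 1) := fun i hi =>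
    Nat.notMem_of_lt_sInf (lt_of_le_of_lt hi hτ)
  obtain ⟨φ, D⟩ := R.exists_dominates (G := G) hd hn' (hns 0 (Nat.zero_le _))
  have hφcard : (φ '' U).ncard = U.ncard := D.inj.ncard_image
  have hδpos : 1 ≤ δ := by
    obtain ⟨b, hub, -, hb⟩ := R.child u hu
    rw [← huδ]
    exact (Set.ncard_pos (Set.toFinite _)).2 ⟨b, hub, hb⟩
  obtain ⟨i, hi, hi0, x, hx, hxu⟩ : ∃ i, i + (treeHeight T z + 1) / 2 + (δ - 2) ≤ istar ∧
      1 + 2 * ((treeHeight T z + 1) / 2) ≤ i ∧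
      ∃ x, x ∉ φ '' U ∧ x ∈ univSet (bootProcess T G i) := by
    by_cases hδ1 : δ = 1
    · -- The degree condition is vacuous, so any vertex outside `φ '' U` will do.
      obtain ⟨x, hx⟩ : ((φ '' U)ᶜ).Nonempty := by
        rw [← Set.ncard_pos (Set.toFinite _)]
        have h1 := Set.ncard_add_ncard_compl (φ '' U)
        have h2 := Set.ncard_add_ncard_compl U
        have h3 : 0 < Nat.card α := @Nat.card_pos _ ⟨u⟩ _
        omega
      refine ⟨1 + 2 * ((treeHeight T z + 1) / 2) + 1, by omega, by omega, x, hx, ?_⟩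
      exact D.mem_univSet R hn' hu hx (by omega)
    · obtain ⟨x, hx, hdeg⟩ := D.exists_degree R hδle (μ := μ) hn' hμ.ge
        fun j hj => hns _ (by omega)
      refine ⟨1 + 2 * ((treeHeight T z + 1) / 2) + μ + 1 + 1, by omega, by omega, x, hx, ?_⟩
      exact (D.mono (bootProcess_mono T G (by omega))).mem_univSet R hn' hu hx (by omega)
  have hU := (D.mono (bootProcess_mono T G hi0)).subset_univSet R hd hn' hx hxu
  have hgrow : ∀ m, i + (treeHeight T z + 1) / 2 + m ≤ istar → U.ncard + 1 + m ≤
      (univSet (bootProcess T G (i + (treeHeight T z + 1) / 2 + m))).ncard := by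
    intro m
    induction m with
    | zero =>
      intro _
      rw [← hφcard, ← Set.ncard_insert_of_notMem hx (Set.toFinite _)]
      refine Set.ncard_le_ncard ?_ (Set.toFinite _)
      rintro y (rfl | hy)
      · exact univSet_mono (bootProcess_mono T G (Nat.le_add_right i _)) hxu
      · exact hU hy
    | succ m ih =>
      intro hm
      have h1 := ih (by omega)
      have h2 := R.univSet_growth hδle hu huδ hn'
        (hns (i + (treeHeight T z + 1) / 2 + m) (by omega)) (by omega)
      exact (Nat.add_le_add_right h1 1).trans h2
  have h1 := hgrow (δ - 2) hi
  have h2 : (univSet (bootProcess T G (i + (treeHeight T z + 1) / 2 + (δ - 2)))).ncard ≤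
      (univSet (bootProcess T G istar)).ncard :=
    Set.ncard_le_ncard (univSet_mono (bootProcess_mono T G hi)) (Set.toFinite _)
  change U.ncard + δ - 2 ≤ (univSet (bootProcess T G istar)).ncard
  omega
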